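/- arXiv:2204.06686 — 2 statements merged into one kernel-verified Lean document; each statement's English description precedes it below -/
import Mathlib

section
/- Let f : {0,1}^n → ℝ, let p ≥ 1, let ρ_1, …, ρ_n ∈ [0,1], and let S = T_{ρ_1} ⊗ ⋯ ⊗ T_{ρ_n} be the corresponding product noise operator. Then E_x[‖∇(Sf)(x)‖_p] ≤ E_x[‖∇f(x)‖_p]. -/
open Finset

noncomputable section

/-- Expectation over the uniform distribution on `{0,1}^n`. -/
def hcExp (n : ℕ) (g : (Fin n → Bool) → ℝ) : ℝ :=
  (∑ x : Fin n → Bool, g x) / 2 ^ n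

/-- Flip the `i`-th coordinate of `x`. -/
def hcFlip {n : ℕ} (x : Fin n → Bool) (i : Fin n) : Fin n → Bool :=
  Function.update x i (!(x i))

/-- Sensitivity of `f` at `x`. -/
def sens {n : ℕ} (f : (Fin n → Bool) → Bool) (x : Fin n → Bool) : ℕ :=
  (Finset.univ.filter fun i => f (hcFlip x i) ≠ f x).card

/-- `f` with values in `{0,1} ⊆ ℝ`. -/
def toReal {n : ℕ} (f : (Fin n → Bool) → Bool) : (Fin n → Bool) → ℝ :=
  fun x => if f x then 1 else 0

/-- Variance of a Boolean function. -/
def hcVar (n : ℕ) (f : (Fin n → Bool) → Bool) : ℝ :=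
  hcExp n (toReal f) - (hcExp n (toReal f)) ^ 2

/-- Influence of coordinate `i`. -/
def influence (n : ℕ) (f : (Fin n → Bool) → Bool) (i : Fin n) : ℝ :=
  hcExp n (fun x => if f (hcFlip x i) = f x then 0 else 1)

/-- Fourier character. -/
def chi {n : ℕ} (S : Finset (Fin n)) (x : Fin n → Bool) : ℝ :=
  ∏ i ∈ S, (if x i then (-1 : ℝ) else 1)

/-- Fourier coefficient of `g` at `S`. -/
def fcoef (n : ℕ) (g : (Fin n → Bool) → ℝ) (S : Finset (Fin n)) : ℝ :=
  hcExp n (fun x => g x * chi S x)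

/-- Derivative of `g` along coordinate `i`. -/
def derivOn {n : ℕ} (g : (Fin n → Bool) → ℝ) (i : Fin n) (x : Fin n → Bool) : ℝ :=
  g (Function.update x i false) - g (Function.update x i true)

/-- Euclidean norm of the gradient of `g` at `x`. -/
def gradNorm2 {n : ℕ} (g : (Fin n → Bool) → ℝ) (x : Fin n → Bool) : ℝ :=
  Real.sqrt (∑ i, (derivOn g i x) ^ 2)

/-- `ℓ_p` norm of the gradient of `g` at `x`. -/
def gradNormP {n : ℕ} (p : ℝ) (g : (Fin n → Bool) → ℝ) (x : Fin n → Bool) : ℝ :=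
  (∑ i, |derivOn g i x| ^ p) ^ (1 / p)

/-- Fourier weight at exactly level `d`. -/
def wEq (n : ℕ) (g : (Fin n → Bool) → ℝ) (d : ℕ) : ℝ :=
  ∑ S ∈ Finset.univ.filter (fun S : Finset (Fin n) => S.card = d), (fcoef n g S) ^ 2

/-- Approximate level-`d` Fourier weight: levels in `[d, 2d)`. -/
def wApprox (n : ℕ) (g : (Fin n → Bool) → ℝ) (d : ℕ) : ℝ :=
  ∑ S ∈ Finset.univ.filter (fun S : Finset (Fin n) => d ≤ S.card ∧ S.card < 2 * d),
    (fcoef n g S) ^ 2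

/-- Fourier weight at levels `≥ d`. -/
def wGe (n : ℕ) (g : (Fin n → Bool) → ℝ) (d : ℕ) : ℝ :=
  ∑ S ∈ Finset.univ.filter (fun S : Finset (Fin n) => d ≤ S.card), (fcoef n g S) ^ 2


/-- The product noise operator `T_{ρ₁} ⊗ ⋯ ⊗ T_{ρₙ}`: independently for each `i`,
`y i = x i` with probability `ρ i` and `y i` is uniform otherwise, so `y i = x i`
with total probability `(1 + ρ i)/2`. -/
def prodNoiseOp {n : ℕ} (ρ : Fin n → ℝ) (g : (Fin n → Bool) → ℝ)
    (x : Fin n → Bool) : ℝ :=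
  ∑ y : Fin n → Bool,
    (∏ i, if y i = x i then (1 + ρ i) / 2 else (1 - ρ i) / 2) * g y

/-!
The noise operator is convolution on the group `𝔽₂ⁿ`, here `Fin n → Bool` under `∆`, with the
product kernel whose factors are `(1 ± ρ i) / 2`; for `|ρ i| ≤ 1` this is a probability weight.
Translating a function by `z` translates its gradient, up to the signs of some coordinates, to which
the `ℓ_p` norm is blind. Minkowski's inequality therefore bounds the gradient norm of the
convolution pointwise by an average of translates of the gradient norm of `f`, and the uniform
measure is translation invariant.
-/

section

open scoped symmDiff

lemma sum_comp_symmDiff_left {α M : Type*} [GeneralizedBooleanAlgebra α] [Fintype α]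
    [AddCommMonoid M] (a : α) (g : α → M) : ∑ b, g (a ∆ b) = ∑ b, g b :=
  Equiv.sum_comp (symmDiff_right_involutive a).toPerm g

lemma symmDiff_update {ι : Type*} [DecidableEq ι] {α : ι → Type*}
    [∀ i, GeneralizedCoheytingAlgebra (α i)] (z x : ∀ i, α i) (i : ι) (b : α i) :
    z ∆ Function.update x i b = Function.update (z ∆ x) i (z i ∆ b) := by
  funext j
  rcases eq_or_ne j i with rfl | hji
  · simp
  · simp [hji]

variable {n : ℕ}

lemma hcExp_mono {g h : (Fin n → Bool) → ℝ} (hgh : ∀ x, g x ≤ h x) : hcExp n g ≤ hcExp n h :=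
  div_le_div_of_nonneg_right (sum_le_sum fun x _ => hgh x) (by positivity)

lemma hcExp_sum_mul {ι : Type*} (s : Finset ι) (c : ι → ℝ) (g : ι → (Fin n → Bool) → ℝ) :
    hcExp n (fun x => ∑ j ∈ s, c j * g j x) = ∑ j ∈ s, c j * hcExp n (g j) := by
  simp only [hcExp, mul_div_assoc', mul_sum, ← sum_div]
  rw [sum_comm]

lemma hcExp_comp_symmDiff_left (z : Fin n → Bool) (g : (Fin n → Bool) → ℝ) :
    hcExp n (fun x => g (z ∆ x)) = hcExp n g :=
  congrArg (· / 2 ^ n) (sum_comp_symmDiff_left z g)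

lemma abs_derivOn_comp_symmDiff_left (g : (Fin n → Bool) → ℝ) (z x : Fin n → Bool) (i : Fin n) :
    |derivOn (fun y => g (z ∆ y)) i x| = |derivOn g i (z ∆ x)| := by
  simp only [derivOn, symmDiff_update, Bool.symmDiff_eq_xor]
  cases z i
  · simp only [Bool.false_xor]
  · simp only [Bool.true_xor, Bool.not_false, Bool.not_true, abs_sub_comm]

lemma gradNormP_comp_symmDiff_left (p : ℝ) (g : (Fin n → Bool) → ℝ) (z x : Fin n → Bool) :
    gradNormP p (fun y => g (z ∆ y)) x = gradNormP p g (z ∆ x) := by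
  simp only [gradNormP, abs_derivOn_comp_symmDiff_left]

lemma derivOn_sum_mul {ι : Type*} (s : Finset ι) (c : ι → ℝ) (g : ι → (Fin n → Bool) → ℝ)
    (i : Fin n) (x : Fin n → Bool) :
    derivOn (fun y => ∑ j ∈ s, c j * g j y) i x = ∑ j ∈ s, c j * derivOn (g j) i x := by
  simp only [derivOn, mul_sub, sum_sub_distrib]

lemma gradNormP_eq_norm_toLp {p : ℝ} (hp : 0 < p) (g : (Fin n → Bool) → ℝ) (x : Fin n → Bool) :
    gradNormP p g x = ‖WithLp.toLp (ENNReal.ofReal p) (derivOn g · x)‖ := by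
  have hp_toReal : (ENNReal.ofReal p).toReal = p := ENNReal.toReal_ofReal hp.le
  rw [PiLp.norm_eq_sum (hp_toReal.symm ▸ hp)]
  simp only [gradNormP, hp_toReal, Real.norm_eq_abs]

lemma gradNormP_sum_mul_le {p : ℝ} (hp : 1 ≤ p) {ι : Type*} (s : Finset ι) (c : ι → ℝ)
    (g : ι → (Fin n → Bool) → ℝ) (x : Fin n → Bool) :
    gradNormP p (fun y => ∑ j ∈ s, c j * g j y) x ≤ ∑ j ∈ s, |c j| * gradNormP p (g j) x := by
  have : Fact (1 ≤ ENNReal.ofReal p) := ⟨ENNReal.one_le_ofReal.mpr hp⟩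
  simp only [gradNormP_eq_norm_toLp (zero_lt_one.trans_le hp), derivOn_sum_mul]
  calc ‖WithLp.toLp (ENNReal.ofReal p) fun i => ∑ j ∈ s, c j * derivOn (g j) i x‖
      = ‖∑ j ∈ s, c j • WithLp.toLp (ENNReal.ofReal p) (derivOn (g j) · x)‖ := by
        congr 1
        ext i
        simp
    _ ≤ ∑ j ∈ s, |c j| * ‖WithLp.toLp (ENNReal.ofReal p) (derivOn (g j) · x)‖ :=
        norm_sum_le_of_le s fun j _ => (norm_smul (c j) _).le

/-- Convolution of `w` and `f` over the group `𝔽₂ⁿ`, with sums in place of averages. Addition in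
`𝔽₂ⁿ` is the symmetric difference `∆` (coordinatewise `xor`), and every element is its own
negative. -/
def xorConv (w f : (Fin n → Bool) → ℝ) (x : Fin n → Bool) : ℝ :=
  ∑ z, w z * f (z ∆ x)

lemma gradNormP_xorConv_le {p : ℝ} (hp : 1 ≤ p) (w f : (Fin n → Bool) → ℝ) (x : Fin n → Bool) :
    gradNormP p (xorConv w f) x ≤ ∑ z, |w z| * gradNormP p f (z ∆ x) :=
  (gradNormP_sum_mul_le hp univ w (fun z y => f (z ∆ y)) x).trans_eq <| by
    simp only [gradNormP_comp_symmDiff_left]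

lemma hcExp_gradNormP_xorConv_le {p : ℝ} (hp : 1 ≤ p) (w f : (Fin n → Bool) → ℝ) :
    hcExp n (gradNormP p (xorConv w f)) ≤ (∑ z, |w z|) * hcExp n (gradNormP p f) :=
  calc hcExp n (gradNormP p (xorConv w f))
      ≤ hcExp n (fun x => ∑ z, |w z| * gradNormP p f (z ∆ x)) :=
        hcExp_mono (gradNormP_xorConv_le hp w f)
    _ = ∑ z, |w z| * hcExp n (fun x => gradNormP p f (z ∆ x)) := hcExp_sum_mul ..
    _ = (∑ z, |w z|) * hcExp n (gradNormP p f) := by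
        simp only [hcExp_comp_symmDiff_left, sum_mul]

/-- The convolution kernel of `prodNoiseOp ρ`: the weight of the set `{i | z i = true}` of flipped
coordinates, each coordinate `i` being flipped independently with probability `(1 - ρ i) / 2`. -/
def noiseKernel (ρ : Fin n → ℝ) (z : Fin n → Bool) : ℝ :=
  ∏ i, if z i then (1 - ρ i) / 2 else (1 + ρ i) / 2

lemma noiseKernel_nonneg {ρ : Fin n → ℝ} (hρ : ∀ i, |ρ i| ≤ 1) (z : Fin n → Bool) :
    0 ≤ noiseKernel ρ z := by
  refine prod_nonneg fun i _ => ?_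
  obtain ⟨hlower, hupper⟩ := abs_le.mp (hρ i)
  split_ifs <;> linarith

lemma sum_noiseKernel (ρ : Fin n → ℝ) : ∑ z, noiseKernel ρ z = 1 :=
  calc ∑ z, noiseKernel ρ z
      = ∏ i, ∑ b : Bool, if b then (1 - ρ i) / 2 else (1 + ρ i) / 2 :=
        (Fintype.prod_sum fun i (b : Bool) => if b then (1 - ρ i) / 2 else (1 + ρ i) / 2).symm
    _ = 1 := prod_eq_one fun i _ => by
        simp only [Fintype.sum_bool, if_true, Bool.false_eq_true, if_false]
        ring

lemma noiseKernel_symmDiff (ρ : Fin n → ℝ) (x y : Fin n → Bool) :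
    noiseKernel ρ (x ∆ y) = ∏ i, if y i = x i then (1 + ρ i) / 2 else (1 - ρ i) / 2 := by
  refine prod_congr rfl fun i _ => ?_
  rw [Pi.symmDiff_apply, Bool.symmDiff_eq_xor]
  cases x i <;> cases y i <;> rfl

lemma prodNoiseOp_eq_xorConv (ρ : Fin n → ℝ) (f : (Fin n → Bool) → ℝ) :
    prodNoiseOp ρ f = xorConv (noiseKernel ρ) f := by
  funext x
  calc prodNoiseOp ρ f x
      = ∑ y, noiseKernel ρ (x ∆ y) * f y := by simp only [prodNoiseOp, noiseKernel_symmDiff]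
    _ = ∑ z, noiseKernel ρ (x ∆ (x ∆ z)) * f (x ∆ z) :=
        (sum_comp_symmDiff_left x fun y => noiseKernel ρ (x ∆ y) * f y).symm
    _ = ∑ z, noiseKernel ρ z * f (z ∆ x) :=
        sum_congr rfl fun z _ => by rw [symmDiff_symmDiff_cancel_left, symmDiff_comm x z]

theorem noise_decreases_talagrand_boundary_general (f : (Fin n → Bool) → ℝ) {p : ℝ} (hp : 1 ≤ p)
    {ρ : Fin n → ℝ} (hρ : ∀ i, |ρ i| ≤ 1) :
    hcExp n (gradNormP p (prodNoiseOp ρ f)) ≤ hcExp n (gradNormP p f) :=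
  calc hcExp n (gradNormP p (prodNoiseOp ρ f))
      ≤ (∑ z, |noiseKernel ρ z|) * hcExp n (gradNormP p f) :=
        prodNoiseOp_eq_xorConv ρ f ▸ hcExp_gradNormP_xorConv_le hp (noiseKernel ρ) f
    _ = hcExp n (gradNormP p f) := by
        simp only [abs_of_nonneg (noiseKernel_nonneg hρ _), sum_noiseKernel, one_mul]

end

theorem noise_decreases_talagrand_boundary (n : ℕ) (f : (Fin n → Bool) → ℝ)
    (p : ℝ) (hp : 1 ≤ p) (ρ : Fin n → ℝ) (hρ : ∀ i, 0 ≤ ρ i ∧ ρ i ≤ 1) :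
    hcExp n (fun x => gradNormP p (prodNoiseOp ρ f) x) ≤
      hcExp n (fun x => gradNormP p f x) :=
  noise_decreases_talagrand_boundary_general f hp fun i =>
    abs_le.mpr ⟨neg_one_lt_zero.le.trans (hρ i).1, (hρ i).2⟩

end
end

section
/- Let f : {0,1}^n → {0,1} and let d ∈ ℕ. Then Σ_{S ⊆ [n], |S| ≤ d} f̂(S)² ≤ 2^d · E[f]^{5/4}. -/
open Finset

noncomputable section

/-!
Let `p` be the part of `g` of degree at most `d` and `W` its Fourier weight, so that
`W = 𝔼 (g * p) = 𝔼 p ^ 2`. Hölder's inequality with exponents `4/3` and `4`, followed by Bonami's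
bound `‖p‖₄ ≤ √3 ^ d * ‖p‖₂` and Bessel's inequality `‖p‖₂ ≤ ‖g‖₂`, gives
`W ≤ √3 ^ d * ‖g‖_{4/3} * ‖g‖₂`. If `|g| ≤ 1`, the two norms of `g` are at most `(𝔼 |g|) ^ (3/4)`
and `(𝔼 |g|) ^ (1/2)`, which is where the exponent `5/4` comes from.

Bonami's bound goes by induction on the variables: in `𝔼 (u + χ_i * v) ^ 4`, with `u` and `v`
independent of coordinate `i`, the odd powers of `χ_i` average to zero, and Cauchy–Schwarz bounds
the mixed term, so that `𝔼 u ^ 4 ≤ A ^ 2` and `𝔼 v ^ 4 ≤ B ^ 2` give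
`A ^ 2 + 6 * A * B + B ^ 2 ≤ (A + 3 * B) ^ 2`. Each variable in a character thus costs a factor `3`.
-/

open scoped BigOperators

lemma expect_mul_le_Lp_mul_Lq {ι : Type*} (s : Finset ι) (f g : ι → ℝ) {p q : ℝ}
    (hpq : p.HolderConjugate q) :
    𝔼 i ∈ s, f i * g i ≤
      (𝔼 i ∈ s, |f i| ^ p) ^ (1 / p) * (𝔼 i ∈ s, |g i| ^ q) ^ (1 / q) := by
  have card_rpow : (#s : ℝ) ^ (1 / p) * (#s : ℝ) ^ (1 / q) = #s := by
    rw [← Real.rpow_add_of_nonneg (Nat.cast_nonneg _) hpq.one_div_nonneg hpq.symm.one_div_nonneg,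
      one_div, one_div, hpq.inv_add_inv_eq_one, Real.rpow_one]
  simp only [expect_eq_sum_div_card]
  rw [Real.div_rpow (by positivity) (by positivity), Real.div_rpow (by positivity) (by positivity),
    div_mul_div_comm, card_rpow]
  gcongr
  exact Real.inner_le_Lp_mul_Lq s f g hpq

section

variable {n : ℕ}

lemma hcExp_eq_expect (g : (Fin n → Bool) → ℝ) : hcExp n g = 𝔼 x, g x := by
  simp [hcExp, Fintype.expect_eq_sum_div_card]

lemma hcExp_nonneg {g : (Fin n → Bool) → ℝ} (hg : ∀ x, 0 ≤ g x) : 0 ≤ hcExp n g := by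
  rw [hcExp_eq_expect]
  exact expect_nonneg fun x _ => hg x

lemma fcoef_eq_expect (g : (Fin n → Bool) → ℝ) (S : Finset (Fin n)) :
    fcoef n g S = 𝔼 x, g x * chi S x :=
  hcExp_eq_expect _

lemma hcFlip_involutive (i : Fin n) :
    Function.Involutive fun x : Fin n → Bool => hcFlip x i :=
  fun x => by simp [hcFlip]

lemma expect_hcFlip (i : Fin n) (g : (Fin n → Bool) → ℝ) :
    𝔼 x, g (hcFlip x i) = 𝔼 x, g x :=
  Fintype.expect_equiv (hcFlip_involutive i).toPerm _ _ fun _ => rfl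

lemma chi_insert {i : Fin n} {S : Finset (Fin n)} (hi : i ∉ S) (x : Fin n → Bool) :
    chi (insert i S) x = chi {i} x * chi S x := by
  simp only [chi, prod_insert hi, prod_singleton]

lemma chi_hcFlip_of_notMem {i : Fin n} {S : Finset (Fin n)} (hi : i ∉ S) (x : Fin n → Bool) :
    chi S (hcFlip x i) = chi S x := by
  refine prod_congr rfl fun j hj => ?_
  rw [hcFlip, Function.update_of_ne (ne_of_mem_of_not_mem hj hi)]

lemma chi_singleton_hcFlip (i : Fin n) (x : Fin n → Bool) :
    chi {i} (hcFlip x i) = -chi {i} x := by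
  cases h : x i <;> simp [chi, hcFlip, h]

lemma chi_hcFlip_of_mem {i : Fin n} {S : Finset (Fin n)} (hi : i ∈ S) (x : Fin n → Bool) :
    chi S (hcFlip x i) = -chi S x := by
  rw [← insert_erase hi, chi_insert (notMem_erase i S), chi_insert (notMem_erase i S),
    chi_singleton_hcFlip, chi_hcFlip_of_notMem (notMem_erase i S), neg_mul]

lemma chi_sq (S : Finset (Fin n)) (x : Fin n → Bool) : chi S x ^ 2 = 1 := by
  rw [chi, ← prod_pow]
  exact prod_eq_one fun i _ => by split_ifs <;> norm_num

lemma expect_eq_zero_of_hcFlip_eq_neg {i : Fin n} {g : (Fin n → Bool) → ℝ}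
    (hg : ∀ x, g (hcFlip x i) = -g x) : 𝔼 x, g x = 0 := by
  have h := expect_hcFlip i g
  simp only [hg, expect_neg_distrib] at h
  linarith

lemma expect_chi_mul_chi (S T : Finset (Fin n)) :
    𝔼 x, chi S x * chi T x = if S = T then 1 else 0 := by
  split_ifs with hST
  · simp only [hST, ← sq, chi_sq, Fintype.expect_one]
  · obtain ⟨i, hi⟩ := symmDiff_nonempty.2 hST
    refine expect_eq_zero_of_hcFlip_eq_neg (i := i) fun x => ?_
    obtain ⟨hiS, hiT⟩ | ⟨hiT, hiS⟩ := mem_symmDiff.1 hi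
    · rw [chi_hcFlip_of_mem hiS, chi_hcFlip_of_notMem hiT, neg_mul]
    · rw [chi_hcFlip_of_notMem hiS, chi_hcFlip_of_mem hiT, mul_neg]

/-- The Walsh polynomial `∑ S ∈ 𝒮, a S * χ_S`, whose Fourier spectrum lies in `𝒮`. The values of `a`
outside `𝒮` are irrelevant, so `walshPoly 𝒮 (fcoef n g)` is the projection of `g` to the characters
in `𝒮`. -/
def walshPoly (𝒮 : Finset (Finset (Fin n))) (a : Finset (Fin n) → ℝ) (x : Fin n → Bool) : ℝ :=
  ∑ S ∈ 𝒮, a S * chi S x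

lemma expect_mul_walshPoly (g : (Fin n → Bool) → ℝ) (𝒮 : Finset (Finset (Fin n)))
    (a : Finset (Fin n) → ℝ) : 𝔼 x, g x * walshPoly 𝒮 a x = ∑ S ∈ 𝒮, a S * fcoef n g S := by
  simp only [walshPoly, mul_sum, expect_sum_comm, fcoef_eq_expect, mul_expect, mul_left_comm]

lemma fcoef_walshPoly_of_mem {𝒮 : Finset (Finset (Fin n))} {S : Finset (Fin n)} (hS : S ∈ 𝒮)
    (a : Finset (Fin n) → ℝ) : fcoef n (walshPoly 𝒮 a) S = a S := by
  simp only [fcoef_eq_expect, walshPoly, sum_mul, expect_sum_comm, mul_assoc, ← mul_expect,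
    expect_chi_mul_chi, mul_ite, mul_one, mul_zero, sum_ite_eq', if_pos hS]

lemma expect_walshPoly_sq (𝒮 : Finset (Finset (Fin n))) (a : Finset (Fin n) → ℝ) :
    𝔼 x, walshPoly 𝒮 a x ^ 2 = ∑ S ∈ 𝒮, a S ^ 2 := by
  simp only [sq, expect_mul_walshPoly]
  exact sum_congr rfl fun S hS => by rw [fcoef_walshPoly_of_mem hS]

lemma sum_fcoef_sq_le_expect_sq (𝒮 : Finset (Finset (Fin n))) (g : (Fin n → Bool) → ℝ) :
    ∑ S ∈ 𝒮, fcoef n g S ^ 2 ≤ 𝔼 x, g x ^ 2 := by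
  have hgp : 𝔼 x, g x * walshPoly 𝒮 (fcoef n g) x = ∑ S ∈ 𝒮, fcoef n g S ^ 2 := by
    simp only [expect_mul_walshPoly, sq]
  have hdist : 0 ≤ 𝔼 x, (g x - walshPoly 𝒮 (fcoef n g) x) ^ 2 :=
    expect_nonneg fun _ _ => sq_nonneg _
  simp only [sub_sq, expect_add_distrib, expect_sub_distrib, mul_assoc, ← mul_expect, hgp,
    expect_walshPoly_sq] at hdist
  linarith

lemma walshPoly_powerset_hcFlip {i : Fin n} {T : Finset (Fin n)} (hi : i ∉ T)
    (a : Finset (Fin n) → ℝ) (x : Fin n → Bool) :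
    walshPoly T.powerset a (hcFlip x i) = walshPoly T.powerset a x :=
  sum_congr rfl fun _ hS => by rw [chi_hcFlip_of_notMem (notMem_of_mem_powerset_of_notMem hS hi)]

lemma walshPoly_powerset_insert {i : Fin n} {T : Finset (Fin n)} (hi : i ∉ T)
    (a : Finset (Fin n) → ℝ) (x : Fin n → Bool) :
    walshPoly (insert i T).powerset a x =
      walshPoly T.powerset a x + chi {i} x * walshPoly T.powerset (fun S => a (insert i S)) x := by
  rw [walshPoly, sum_powerset_insert hi, walshPoly, walshPoly, mul_sum]
  congr 1
  refine sum_congr rfl fun S hS => ?_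
  rw [chi_insert (notMem_of_mem_powerset_of_notMem hS hi), mul_left_comm]

lemma sum_powerset_insert_three_pow_card_mul_sq {ι : Type*} [DecidableEq ι] {i : ι} {T : Finset ι}
    (hi : i ∉ T) (a : Finset ι → ℝ) :
    ∑ S ∈ (insert i T).powerset, 3 ^ #S * a S ^ 2 =
      ∑ S ∈ T.powerset, 3 ^ #S * a S ^ 2 + 3 * ∑ S ∈ T.powerset, 3 ^ #S * a (insert i S) ^ 2 := by
  rw [sum_powerset_insert hi, mul_sum]
  congr 1
  refine sum_congr rfl fun S hS => ?_
  rw [card_insert_of_notMem (notMem_of_mem_powerset_of_notMem hS hi), pow_succ', mul_assoc]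

lemma expect_add_chi_mul_pow_four {i : Fin n} {u v : (Fin n → Bool) → ℝ}
    (hu : ∀ x, u (hcFlip x i) = u x) (hv : ∀ x, v (hcFlip x i) = v x) :
    𝔼 x, (u x + chi {i} x * v x) ^ 4 =
      𝔼 x, u x ^ 4 + 6 * 𝔼 x, u x ^ 2 * v x ^ 2 + 𝔼 x, v x ^ 4 := by
  have hodd : 𝔼 x, chi {i} x * (4 * u x ^ 3 * v x + 4 * u x * v x ^ 3) = 0 :=
    expect_eq_zero_of_hcFlip_eq_neg (i := i) fun x => by
      rw [chi_singleton_hcFlip, hu, hv, neg_mul]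
  have hexpand (x : Fin n → Bool) : (u x + chi {i} x * v x) ^ 4 =
      u x ^ 4 + 6 * (u x ^ 2 * v x ^ 2) + v x ^ 4 +
        chi {i} x * (4 * u x ^ 3 * v x + 4 * u x * v x ^ 3) := by
    linear_combination (6 * u x ^ 2 * v x ^ 2 + 4 * chi {i} x * u x * v x ^ 3 +
      v x ^ 4 * (chi {i} x ^ 2 + 1)) * chi_sq {i} x
  simp only [hexpand, expect_add_distrib, hodd, add_zero, mul_expect]

lemma expect_add_chi_mul_pow_four_le {i : Fin n} {u v : (Fin n → Bool) → ℝ}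
    (hu : ∀ x, u (hcFlip x i) = u x) (hv : ∀ x, v (hcFlip x i) = v x) {A B : ℝ}
    (hA : 0 ≤ A) (hB : 0 ≤ B) (huA : 𝔼 x, u x ^ 4 ≤ A ^ 2) (hvB : 𝔼 x, v x ^ 4 ≤ B ^ 2) :
    𝔼 x, (u x + chi {i} x * v x) ^ 4 ≤ (A + 3 * B) ^ 2 := by
  have huv : 𝔼 x, u x ^ 2 * v x ^ 2 ≤ A * B := by
    refine le_of_sq_le_sq ?_ (by positivity)
    calc (𝔼 x, u x ^ 2 * v x ^ 2) ^ 2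
        ≤ (𝔼 x, (u x ^ 2) ^ 2) * 𝔼 x, (v x ^ 2) ^ 2 := expect_mul_sq_le_sq_mul_sq _ _ _
      _ = (𝔼 x, u x ^ 4) * 𝔼 x, v x ^ 4 := by simp only [← pow_mul]
      _ ≤ A ^ 2 * B ^ 2 := by gcongr
      _ = (A * B) ^ 2 := (mul_pow A B 2).symm
  rw [expect_add_chi_mul_pow_four hu hv]
  nlinarith [sq_nonneg B]

lemma expect_walshPoly_powerset_pow_four_le (T : Finset (Fin n)) (a : Finset (Fin n) → ℝ) :
    𝔼 x, walshPoly T.powerset a x ^ 4 ≤ (∑ S ∈ T.powerset, 3 ^ #S * a S ^ 2) ^ 2 := by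
  induction T using Finset.induction_on generalizing a with
  | empty => simp [walshPoly, chi, ← pow_mul]
  | insert i T hi ih =>
    simp only [walshPoly_powerset_insert hi, sum_powerset_insert_three_pow_card_mul_sq hi]
    exact expect_add_chi_mul_pow_four_le (walshPoly_powerset_hcFlip hi _)
      (walshPoly_powerset_hcFlip hi _) (by positivity) (by positivity) (ih _) (ih _)

lemma expect_walshPoly_pow_four_le (𝒮 : Finset (Finset (Fin n))) (a : Finset (Fin n) → ℝ) :
    𝔼 x, walshPoly 𝒮 a x ^ 4 ≤ (∑ S ∈ 𝒮, 3 ^ #S * a S ^ 2) ^ 2 := by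
  simpa [walshPoly, ite_mul, ite_pow] using
    expect_walshPoly_powerset_pow_four_le univ fun S => if S ∈ 𝒮 then a S else 0

lemma expect_walshPoly_pow_four_le_of_card_le {𝒮 : Finset (Finset (Fin n))} {d : ℕ}
    (h𝒮 : ∀ S ∈ 𝒮, #S ≤ d) (a : Finset (Fin n) → ℝ) :
    𝔼 x, walshPoly 𝒮 a x ^ 4 ≤ (3 ^ d * ∑ S ∈ 𝒮, a S ^ 2) ^ 2 := by
  refine (expect_walshPoly_pow_four_le 𝒮 a).trans ?_
  rw [mul_sum]
  gcongr with S hS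
  · norm_num
  · exact h𝒮 S hS

lemma expect_walshPoly_rpow_le_of_card_le {𝒮 : Finset (Finset (Fin n))} {d : ℕ}
    (h𝒮 : ∀ S ∈ 𝒮, #S ≤ d) (a : Finset (Fin n) → ℝ) :
    (𝔼 x, |walshPoly 𝒮 a x| ^ (4 : ℝ)) ^ (1 / 4 : ℝ) ≤ √3 ^ d * √(𝔼 x, walshPoly 𝒮 a x ^ 2) := by
  have habs (t : ℝ) : |t| ^ (4 : ℝ) = t ^ 4 := by
    rw [← Even.pow_abs (by decide : Even 4)]
    exact_mod_cast Real.rpow_natCast |t| 4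
  simp only [habs, expect_walshPoly_sq]
  rw [one_div, Real.rpow_inv_le_iff_of_pos (expect_nonneg fun _ _ => by positivity)
    (by positivity) (by norm_num)]
  calc 𝔼 x, walshPoly 𝒮 a x ^ 4
      ≤ (3 ^ d * ∑ S ∈ 𝒮, a S ^ 2) ^ 2 := expect_walshPoly_pow_four_le_of_card_le h𝒮 a
    _ = ((√3 ^ 2) ^ d * √(∑ S ∈ 𝒮, a S ^ 2) ^ 2) ^ 2 := by
        rw [Real.sq_sqrt (by positivity), Real.sq_sqrt (by positivity)]
    _ = (√3 ^ d * √(∑ S ∈ 𝒮, a S ^ 2)) ^ 4 := by ring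
    _ = (√3 ^ d * √(∑ S ∈ 𝒮, a S ^ 2)) ^ (4 : ℝ) := by
        rw [← habs, abs_of_nonneg (by positivity)]

lemma sum_fcoef_sq_le_of_card_le {𝒮 : Finset (Finset (Fin n))} {d : ℕ} (h𝒮 : ∀ S ∈ 𝒮, #S ≤ d)
    (g : (Fin n → Bool) → ℝ) :
    ∑ S ∈ 𝒮, fcoef n g S ^ 2 ≤
      √3 ^ d * (𝔼 x, |g x| ^ (4 / 3 : ℝ)) ^ (3 / 4 : ℝ) * √(𝔼 x, g x ^ 2) := by
  set p := walshPoly 𝒮 (fcoef n g)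
  have hgp : ∑ S ∈ 𝒮, fcoef n g S ^ 2 = 𝔼 x, g x * p x := by simp only [p, expect_mul_walshPoly, sq]
  have hp : 𝔼 x, p x ^ 2 ≤ 𝔼 x, g x ^ 2 := by
    rw [expect_walshPoly_sq]
    exact sum_fcoef_sq_le_expect_sq 𝒮 g
  calc ∑ S ∈ 𝒮, fcoef n g S ^ 2
      = 𝔼 x, g x * p x := hgp
    _ ≤ (𝔼 x, |g x| ^ (4 / 3 : ℝ)) ^ (1 / (4 / 3) : ℝ) * (𝔼 x, |p x| ^ (4 : ℝ)) ^ (1 / 4 : ℝ) :=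
        expect_mul_le_Lp_mul_Lq _ _ _ (Real.holderConjugate_iff.2 (by norm_num))
    _ ≤ (𝔼 x, |g x| ^ (4 / 3 : ℝ)) ^ (1 / (4 / 3) : ℝ) * (√3 ^ d * √(𝔼 x, p x ^ 2)) := by
        gcongr
        exact expect_walshPoly_rpow_le_of_card_le h𝒮 _
    _ ≤ (𝔼 x, |g x| ^ (4 / 3 : ℝ)) ^ (1 / (4 / 3) : ℝ) * (√3 ^ d * √(𝔼 x, g x ^ 2)) := by
        gcongr
    _ = √3 ^ d * (𝔼 x, |g x| ^ (4 / 3 : ℝ)) ^ (3 / 4 : ℝ) * √(𝔼 x, g x ^ 2) := by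
        rw [one_div_div, mul_left_comm, mul_assoc]

lemma expect_abs_rpow_le {ι : Type*} (s : Finset ι) {g : ι → ℝ} (hg : ∀ i ∈ s, |g i| ≤ 1) {r : ℝ}
    (hr : 1 ≤ r) : 𝔼 i ∈ s, |g i| ^ r ≤ 𝔼 i ∈ s, |g i| :=
  expect_le_expect fun i hi => Real.rpow_le_self_of_le_one (abs_nonneg _) (hg i hi) hr

lemma abs_toReal (f : (Fin n → Bool) → Bool) (x : Fin n → Bool) : |toReal f x| = toReal f x := by
  unfold toReal
  split_ifs <;> simp

lemma abs_toReal_le_one (f : (Fin n → Bool) → Bool) (x : Fin n → Bool) : |toReal f x| ≤ 1 := by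
  unfold toReal
  split_ifs <;> simp

end

theorem low_degree_weight_bound_general (n : ℕ) (g : (Fin n → Bool) → ℝ) (hg : ∀ x, |g x| ≤ 1)
    (d : ℕ) :
    ∑ S : Finset (Fin n) with #S ≤ d, fcoef n g S ^ 2 ≤
      √3 ^ d * hcExp n (fun x => |g x|) ^ (5 / 4 : ℝ) := by
  rw [hcExp_eq_expect]
  set μ := 𝔼 x, |g x|
  have hμ : 0 ≤ μ := expect_nonneg fun _ _ => abs_nonneg _
  have hL43 : 𝔼 x, |g x| ^ (4 / 3 : ℝ) ≤ μ := expect_abs_rpow_le _ (fun x _ => hg x) (by norm_num)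
  have hL2 : 𝔼 x, g x ^ 2 ≤ μ := by
    simpa using expect_abs_rpow_le univ (fun x _ => hg x) one_le_two
  calc ∑ S : Finset (Fin n) with #S ≤ d, fcoef n g S ^ 2
      ≤ √3 ^ d * (𝔼 x, |g x| ^ (4 / 3 : ℝ)) ^ (3 / 4 : ℝ) * √(𝔼 x, g x ^ 2) :=
        sum_fcoef_sq_le_of_card_le (fun S hS => (mem_filter.1 hS).2) g
    _ ≤ √3 ^ d * μ ^ (3 / 4 : ℝ) * √μ := by gcongr
    _ = √3 ^ d * μ ^ (5 / 4 : ℝ) := by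
        rw [mul_assoc, Real.sqrt_eq_rpow μ, ← Real.rpow_add_of_nonneg hμ] <;> norm_num

theorem low_degree_weight_bound (n : ℕ) (f : (Fin n → Bool) → Bool) (d : ℕ) :
    (∑ S ∈ Finset.univ.filter (fun S : Finset (Fin n) => S.card ≤ d),
        (fcoef n (toReal f) S) ^ 2) ≤
      2 ^ d * (hcExp n (toReal f)) ^ ((5 : ℝ) / 4) := by
  have h := low_degree_weight_bound_general n (toReal f) (abs_toReal_le_one f) d
  have hμ := hcExp_nonneg fun x => abs_nonneg (toReal f x)
  simp only [abs_toReal] at h hμ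
  exact h.trans (by gcongr; exact Real.sqrt_le_iff.2 (by norm_num))

end
end
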